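/- Consider the closed-loop system x⁺ = Ψ x + Ξ Q(x) + E d(x), where d : ℝⁿ → ℝ^s is a neglected nonlinearity satisfying |d(x)| ≤ δ for all x in a known set 𝒬 ⊆ ℝⁿ, the data were collected with x(k) ∈ 𝒬 for all samples (so that ‖D₀‖₂ ≤ δ√T), and in the setting of Theorem 6 with Δ := δ√T·I_s the robust Lyapunov inequality holds. Let V(x) := xᵀP₁⁻¹x, 𝒳 := {x : ℓ(x) + g(x, δ) ≤ 0}, ℛ_γ := {x : V(x) ≤ γ} for arbitrary γ > 0, and 𝒵 := ℛ_γ ∩ 𝒳ᶜ. If ℛ_γ ⊆ 𝒬 and V(x) + ℓ(x) + g(x, δ) ≤ γ for all x ∈ 𝒵, then ℛ_γ is positively invariant for the closed-loop system. (Theorem 8: invariance under neglected nonlinearities.) -/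

import Mathlib

open Matrix Filter Topology

noncomputable def euclNorm {ι : Type*} [Fintype ι] (v : ι → ℝ) : ℝ :=
  Real.sqrt (∑ i, v i ^ 2)

noncomputable def spec2Norm {ι κ : Type*} [Fintype ι] [Fintype κ]
    (M : Matrix ι κ ℝ) : ℝ :=
  sSup ((fun v => euclNorm (M *ᵥ v)) '' {v | euclNorm v ≤ 1})

def LoewnerLE {ι : Type*} [Fintype ι] (X Y : Matrix ι ι ℝ) : Prop :=
  (Y - X).PosSemidef

def NegDef {ι : Type*} [Fintype ι] (M : Matrix ι ι ℝ) : Prop :=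
  (-M).PosDef

/-- The data-based bound `ℓ(x)` of inequality (34). -/
noncomputable def ellFun {n s s' p T : ℕ}
    (X₁ : Matrix (Fin n) (Fin T) ℝ) (E : Matrix (Fin n) (Fin s) ℝ)
    (Δ : Matrix (Fin s) (Fin s') ℝ) (P₁ Ω : Matrix (Fin n) (Fin n) ℝ)
    (G₁ : Matrix (Fin T) (Fin n) ℝ) (G₂ : Matrix (Fin T) (Fin p) ℝ)
    (Q : (Fin n → ℝ) → Fin p → ℝ) (x : Fin n → ℝ) : ℝ :=
  - (x ⬝ᵥ ((P₁⁻¹ * Ω * P₁⁻¹) *ᵥ x))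
  + (((2:ℝ) • ((X₁ * G₁) *ᵥ x) + (X₁ * G₂) *ᵥ Q x) ⬝ᵥ (P₁⁻¹ *ᵥ ((X₁ * G₂) *ᵥ Q x)))
  + spec2Norm Δ
      * euclNorm (((2:ℝ) • ((X₁ * G₁) *ᵥ x) + (X₁ * G₂) *ᵥ Q x) ᵥ* (P₁⁻¹ * E))
      * euclNorm (G₂ *ᵥ Q x)
  + spec2Norm Δ * euclNorm ((2:ℝ) • (G₁ *ᵥ x) + G₂ *ᵥ Q x)
      * euclNorm ((Eᵀ * P₁⁻¹ * X₁ * G₂) *ᵥ Q x)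
  + spec2Norm Δ ^ 2 * spec2Norm (Eᵀ * P₁⁻¹ * E)
      * euclNorm ((2:ℝ) • (G₁ *ᵥ x) + G₂ *ᵥ Q x) * euclNorm (G₂ *ᵥ Q x)

/-- The disturbance term `g(x, δ) = r₁(x)δ + r₂(x)δ + r₃δ²` of (35)-(36). -/
noncomputable def gFun {n s s' p T : ℕ}
    (X₁ : Matrix (Fin n) (Fin T) ℝ) (E : Matrix (Fin n) (Fin s) ℝ)
    (Δ : Matrix (Fin s) (Fin s') ℝ) (P₁ : Matrix (Fin n) (Fin n) ℝ)
    (G₁ : Matrix (Fin T) (Fin n) ℝ) (G₂ : Matrix (Fin T) (Fin p) ℝ)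
    (Q : (Fin n → ℝ) → Fin p → ℝ) (δ : ℝ) (x : Fin n → ℝ) : ℝ :=
  2 * euclNorm (((X₁ * G₁) *ᵥ x + (X₁ * G₂) *ᵥ Q x) ᵥ* (P₁⁻¹ * E)) * δ
  + 2 * spec2Norm Δ * spec2Norm (Eᵀ * P₁⁻¹ * E)
      * euclNorm (G₁ *ᵥ x + G₂ *ᵥ Q x) * δ
  + spec2Norm (Eᵀ * P₁⁻¹ * E) * δ ^ 2


section EuclideanNorm

variable {ι κ : Type*} [Fintype ι] [Fintype κ]

lemma euclNorm_nonneg (v : ι → ℝ) : 0 ≤ euclNorm v := Real.sqrt_nonneg _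

lemma euclNorm_sq (v : ι → ℝ) : euclNorm v ^ 2 = v ⬝ᵥ v := by
  rw [euclNorm, Real.sq_sqrt (Finset.sum_nonneg fun i _ => sq_nonneg _)]
  simp [dotProduct, sq]

lemma euclNorm_smul (c : ℝ) (v : ι → ℝ) : euclNorm (c • v) = |c| * euclNorm v := by
  simp only [euclNorm, Pi.smul_apply, smul_eq_mul, mul_pow]
  rw [← Finset.mul_sum, Real.sqrt_mul (sq_nonneg c), Real.sqrt_sq_eq_abs]

lemma abs_dotProduct_le (u v : ι → ℝ) : |u ⬝ᵥ v| ≤ euclNorm u * euclNorm v := by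
  rw [euclNorm, euclNorm, ← Real.sqrt_mul (Finset.sum_nonneg fun i _ => sq_nonneg _)]
  exact Real.abs_le_sqrt (Finset.sum_mul_sq_le_sq_mul_sq _ _ _)

lemma bddAbove_euclNorm_mulVec (M : Matrix ι κ ℝ) :
    BddAbove ((fun v => euclNorm (M *ᵥ v)) '' {v | euclNorm v ≤ 1}) := by
  refine ⟨Real.sqrt (∑ i, ∑ j, M i j ^ 2), ?_⟩
  rintro _ ⟨v, hv, rfl⟩
  refine Real.sqrt_le_sqrt (Finset.sum_le_sum fun i _ => ?_)
  have hv1 : ∑ j, v j ^ 2 ≤ 1 := by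
    simpa using (Real.sqrt_le_iff.mp hv).2
  calc (M *ᵥ v) i ^ 2 ≤ (∑ j, M i j ^ 2) * ∑ j, v j ^ 2 :=
        Finset.sum_mul_sq_le_sq_mul_sq _ _ _
    _ ≤ ∑ j, M i j ^ 2 :=
        mul_le_of_le_one_right (Finset.sum_nonneg fun j _ => sq_nonneg _) hv1

lemma spec2Norm_nonneg (M : Matrix ι κ ℝ) : 0 ≤ spec2Norm M := by
  refine Real.sSup_nonneg ?_
  rintro _ ⟨v, -, rfl⟩
  exact euclNorm_nonneg _

lemma euclNorm_mulVec_le (M : Matrix ι κ ℝ) (v : κ → ℝ) :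
    euclNorm (M *ᵥ v) ≤ spec2Norm M * euclNorm v := by
  rcases (euclNorm_nonneg v).eq_or_lt with h | h
  · have hv : v = 0 := by
      rw [← dotProduct_self_eq_zero, ← euclNorm_sq, ← h, sq, zero_mul]
    simp [hv, euclNorm]
  · have hle : euclNorm (M *ᵥ ((euclNorm v)⁻¹ • v)) ≤ spec2Norm M := by
      refine le_csSup (bddAbove_euclNorm_mulVec M) ⟨_, ?_, rfl⟩
      rw [Set.mem_ofPred_eq, euclNorm_smul, abs_of_pos (inv_pos.mpr h), inv_mul_cancel₀ h.ne']
    rwa [mulVec_smul, euclNorm_smul, abs_of_pos (inv_pos.mpr h), inv_mul_le_iff₀ h,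
      mul_comm] at hle

lemma abs_dotProduct_mulVec_le (M : Matrix ι κ ℝ) (u : ι → ℝ) (v : κ → ℝ) :
    |u ⬝ᵥ (M *ᵥ v)| ≤ spec2Norm M * euclNorm u * euclNorm v :=
  calc |u ⬝ᵥ (M *ᵥ v)| ≤ euclNorm u * euclNorm (M *ᵥ v) := abs_dotProduct_le _ _
    _ ≤ euclNorm u * (spec2Norm M * euclNorm v) :=
        mul_le_mul_of_nonneg_left (euclNorm_mulVec_le M v) (euclNorm_nonneg u)
    _ = spec2Norm M * euclNorm u * euclNorm v := by ring

/-- A spectral norm bound by `K` survives replacing `K` by the spectral norm of `K • 1`, also when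
the codomain is trivial. -/
lemma euclNorm_mulVec_le_spec2Norm_smul_one [DecidableEq ι] {M : Matrix ι κ ℝ} {K : ℝ}
    (hM : spec2Norm M ≤ K) (v : κ → ℝ) :
    euclNorm (M *ᵥ v) ≤ spec2Norm (K • (1 : Matrix ι ι ℝ)) * euclNorm v := by
  have hK : 0 ≤ K := (spec2Norm_nonneg M).trans hM
  rcases (euclNorm_nonneg (M *ᵥ v)).eq_or_lt with h | h
  · rw [← h]
    exact mul_nonneg (spec2Norm_nonneg _) (euclNorm_nonneg _)
  · have hle := euclNorm_mulVec_le (K • (1 : Matrix ι ι ℝ)) (M *ᵥ v)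
    rw [smul_mulVec, one_mulVec, euclNorm_smul, abs_of_nonneg hK] at hle
    exact (euclNorm_mulVec_le M v).trans (mul_le_mul_of_nonneg_right
      (hM.trans (le_of_mul_le_mul_right hle h)) (euclNorm_nonneg v))

lemma loewnerLE_mul_transpose_of_spec2Norm_le [DecidableEq ι] {M : Matrix ι κ ℝ} {K : ℝ}
    (hM : spec2Norm M ≤ K) :
    LoewnerLE (M * Mᵀ) ((K • (1 : Matrix ι ι ℝ)) * (K • (1 : Matrix ι ι ℝ))ᵀ) := by
  have hK : 0 ≤ K := (spec2Norm_nonneg M).trans hM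
  refine PosSemidef.of_dotProduct_mulVec_nonneg ?_ fun v => ?_
  · simp [IsHermitian, conjTranspose_eq_transpose_of_trivial]
  · have hbound : euclNorm (Mᵀ *ᵥ v) ≤ K * euclNorm v := by
      rcases (euclNorm_nonneg (Mᵀ *ᵥ v)).eq_or_lt with h | h
      · rw [← h]
        exact mul_nonneg hK (euclNorm_nonneg _)
      · refine le_of_mul_le_mul_right ?_ h
        calc euclNorm (Mᵀ *ᵥ v) * euclNorm (Mᵀ *ᵥ v) = v ⬝ᵥ (M *ᵥ (Mᵀ *ᵥ v)) := by
              rw [← sq, euclNorm_sq, dotProduct_mulVec v M, ← mulVec_transpose]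
          _ ≤ spec2Norm M * euclNorm v * euclNorm (Mᵀ *ᵥ v) :=
              (le_abs_self _).trans (abs_dotProduct_mulVec_le _ _ _)
          _ ≤ K * euclNorm v * euclNorm (Mᵀ *ᵥ v) := by
              gcongr
              exact euclNorm_nonneg v
    have hsq : euclNorm (Mᵀ *ᵥ v) ^ 2 ≤ (K * euclNorm v) ^ 2 :=
      pow_le_pow_left₀ (euclNorm_nonneg _) hbound 2
    have hM2 : v ⬝ᵥ ((M * Mᵀ) *ᵥ v) = euclNorm (Mᵀ *ᵥ v) ^ 2 := by
      rw [euclNorm_sq, ← mulVec_mulVec, dotProduct_mulVec v M, ← mulVec_transpose]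
    have hK2 : v ⬝ᵥ ((K • (1 : Matrix ι ι ℝ) * (K • (1 : Matrix ι ι ℝ))ᵀ) *ᵥ v)
        = (K * euclNorm v) ^ 2 := by
      rw [mul_pow, euclNorm_sq]
      simp [smul_mulVec, smul_smul, sq]
    rw [star_trivial, sub_mulVec, dotProduct_sub, hM2, hK2]
    linarith

end EuclideanNorm

section QuadraticForm

variable {ι κ : Type*} [Fintype ι] [Fintype κ]

lemma dotProduct_mulVec_comm_of_isSymm {N : Matrix ι ι ℝ} (hN : N.IsSymm) (u v : ι → ℝ) :
    u ⬝ᵥ (N *ᵥ v) = v ⬝ᵥ (N *ᵥ u) := by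
  rw [dotProduct_mulVec, ← mulVec_transpose, hN.eq, dotProduct_comm]

lemma quadraticForm_add_add {N : Matrix ι ι ℝ} (hN : N.IsSymm) (a b c : ι → ℝ) :
    (a + b + c) ⬝ᵥ (N *ᵥ (a + b + c)) = a ⬝ᵥ (N *ᵥ a)
      + ((2 : ℝ) • a + b) ⬝ᵥ (N *ᵥ b) + 2 * ((a + b) ⬝ᵥ (N *ᵥ c)) + c ⬝ᵥ (N *ᵥ c) := by
  simp only [mulVec_add, dotProduct_add, add_dotProduct, smul_dotProduct, smul_eq_mul]
  rw [dotProduct_mulVec_comm_of_isSymm hN b a, dotProduct_mulVec_comm_of_isSymm hN c a,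
    dotProduct_mulVec_comm_of_isSymm hN c b]
  ring

lemma dotProduct_mulVec_mulVec_le (N : Matrix ι ι ℝ) (E : Matrix ι κ ℝ) (y : ι → ℝ)
    (v : κ → ℝ) : |y ⬝ᵥ (N *ᵥ (E *ᵥ v))| ≤ euclNorm (y ᵥ* (N * E)) * euclNorm v := by
  rw [mulVec_mulVec, dotProduct_mulVec]
  exact abs_dotProduct_le _ _

lemma mulVec_dotProduct_mulVec_eq (N : Matrix ι ι ℝ) (E : Matrix ι κ ℝ) (u : κ → ℝ)
    (z : ι → ℝ) : (E *ᵥ u) ⬝ᵥ (N *ᵥ z) = u ⬝ᵥ ((Eᵀ * N) *ᵥ z) := by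
  rw [← mulVec_mulVec, dotProduct_mulVec u, vecMul_transpose]

lemma abs_mulVec_dotProduct_mulVec_mulVec_le (N : Matrix ι ι ℝ) (E : Matrix ι κ ℝ)
    (u v : κ → ℝ) :
    |(E *ᵥ u) ⬝ᵥ (N *ᵥ (E *ᵥ v))| ≤ spec2Norm (Eᵀ * N * E) * euclNorm u * euclNorm v := by
  rw [mulVec_dotProduct_mulVec_eq, mulVec_mulVec]
  exact abs_dotProduct_mulVec_le _ _ _

lemma sub_dotProduct_mulVec_sub_le (N : Matrix ι ι ℝ) (E : Matrix ι κ ℝ) (y z : ι → ℝ)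
    (u v : κ → ℝ) {r q : ℝ} (hu : euclNorm u ≤ r) (hv : euclNorm v ≤ q) :
    (y - E *ᵥ u) ⬝ᵥ (N *ᵥ (z - E *ᵥ v)) ≤ y ⬝ᵥ (N *ᵥ z)
      + euclNorm (y ᵥ* (N * E)) * q + r * euclNorm ((Eᵀ * N) *ᵥ z)
      + spec2Norm (Eᵀ * N * E) * r * q := by
  have hr : 0 ≤ r := (euclNorm_nonneg u).trans hu
  have hyv : -(y ⬝ᵥ (N *ᵥ (E *ᵥ v))) ≤ euclNorm (y ᵥ* (N * E)) * q :=
    (neg_le_abs _).trans ((dotProduct_mulVec_mulVec_le N E y v).trans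
      (mul_le_mul_of_nonneg_left hv (euclNorm_nonneg _)))
  have huz : -((E *ᵥ u) ⬝ᵥ (N *ᵥ z)) ≤ r * euclNorm ((Eᵀ * N) *ᵥ z) := by
    rw [mulVec_dotProduct_mulVec_eq]
    exact (neg_le_abs _).trans ((abs_dotProduct_le _ _).trans
      (mul_le_mul_of_nonneg_right hu (euclNorm_nonneg _)))
  have huv : (E *ᵥ u) ⬝ᵥ (N *ᵥ (E *ᵥ v)) ≤ spec2Norm (Eᵀ * N * E) * r * q :=
    (le_abs_self _).trans ((abs_mulVec_dotProduct_mulVec_mulVec_le N E u v).trans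
      (mul_le_mul (mul_le_mul_of_nonneg_left hu (spec2Norm_nonneg _)) hv (euclNorm_nonneg _)
        (mul_nonneg (spec2Norm_nonneg _) hr)))
  simp only [mulVec_sub, dotProduct_sub, sub_dotProduct]
  linarith

lemma sub_dotProduct_mulVec_mulVec_le (N : Matrix ι ι ℝ) (E : Matrix ι κ ℝ) (y : ι → ℝ)
    (u w : κ → ℝ) {r q : ℝ} (hu : euclNorm u ≤ r) (hw : euclNorm w ≤ q) :
    (y - E *ᵥ u) ⬝ᵥ (N *ᵥ (E *ᵥ w)) ≤
      euclNorm (y ᵥ* (N * E)) * q + spec2Norm (Eᵀ * N * E) * r * q := by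
  have h := sub_dotProduct_mulVec_sub_le N E y 0 u (-w) hu
    (q := q) (by simpa [euclNorm] using hw)
  simpa [mulVec_neg, euclNorm] using h

/-- The Lyapunov inequality in the variables `P`, `Y` yields decrease of `x ↦ xᵀ P⁻¹ x` along the
linear map `M Y P⁻¹`. -/
lemma quadraticForm_le_of_negDef [DecidableEq ι] {P Ω : Matrix ι ι ℝ} (hPsymm : P.IsSymm)
    (hP : P.PosDef) {M : Matrix ι κ ℝ} {Y : Matrix κ ι ℝ}
    (h : NegDef (Yᵀ * Mᵀ * P⁻¹ * (M * Y) - P + Ω)) (x : ι → ℝ) :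
    (M *ᵥ ((Y * P⁻¹) *ᵥ x)) ⬝ᵥ (P⁻¹ *ᵥ (M *ᵥ ((Y * P⁻¹) *ᵥ x)))
      ≤ x ⬝ᵥ (P⁻¹ *ᵥ x) - x ⬝ᵥ ((P⁻¹ * Ω * P⁻¹) *ᵥ x) := by
  have hNsymm : P⁻¹.IsSymm := by rw [IsSymm, transpose_nonsing_inv, hPsymm.eq]
  have hPinv : P * P⁻¹ = 1 := mul_nonsing_inv P ((isUnit_iff_isUnit_det P).mp hP.isUnit)
  have hq := h.posSemidef.dotProduct_mulVec_nonneg (P⁻¹ *ᵥ x)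
  have hM : (P⁻¹ *ᵥ x) ⬝ᵥ ((Yᵀ * Mᵀ * P⁻¹ * (M * Y)) *ᵥ (P⁻¹ *ᵥ x))
      = (M *ᵥ ((Y * P⁻¹) *ᵥ x)) ⬝ᵥ (P⁻¹ *ᵥ (M *ᵥ ((Y * P⁻¹) *ᵥ x))) := by
    rw [← transpose_mul, ← mulVec_mulVec, ← mulVec_dotProduct_mulVec_eq]
    simp only [mulVec_mulVec, Matrix.mul_assoc]
  have hPP : (P⁻¹ *ᵥ x) ⬝ᵥ (P *ᵥ (P⁻¹ *ᵥ x)) = x ⬝ᵥ (P⁻¹ *ᵥ x) := by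
    rw [mulVec_mulVec, hPinv, one_mulVec, dotProduct_comm]
  have hΩ : (P⁻¹ *ᵥ x) ⬝ᵥ (Ω *ᵥ (P⁻¹ *ᵥ x)) = x ⬝ᵥ ((P⁻¹ * Ω * P⁻¹) *ᵥ x) := by
    rw [mulVec_dotProduct_mulVec_eq, hNsymm.eq, mulVec_mulVec]
  rw [star_trivial, neg_mulVec, dotProduct_neg, add_mulVec, sub_mulVec, dotProduct_add,
    dotProduct_sub, hM, hPP, hΩ] at hq
  linarith

end QuadraticForm

/-- Theorem 8 (invariance under neglected nonlinearities). -/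
theorem invariance_neglected_nonlinearities
    {n m p s T : ℕ}
    (A : Matrix (Fin n) (Fin n ⊕ Fin p) ℝ) (B : Matrix (Fin n) (Fin m) ℝ)
    (E : Matrix (Fin n) (Fin s) ℝ)
    (Q : (Fin n → ℝ) → Fin p → ℝ)
    (U₀ : Matrix (Fin m) (Fin T) ℝ) (Z₀ : Matrix (Fin n ⊕ Fin p) (Fin T) ℝ)
    (X₁ : Matrix (Fin n) (Fin T) ℝ) (D₀ : Matrix (Fin s) (Fin T) ℝ)
    (hdata : X₁ = A * Z₀ + B * U₀ + E * D₀)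
    -- the neglected nonlinearity and its strength:
    (d : (Fin n → ℝ) → Fin s → ℝ) (𝒬set : Set (Fin n → ℝ))
    (δ : ℝ) (hδ : 0 < δ)
    (hd : ∀ x ∈ 𝒬set, euclNorm (d x) ≤ δ)
    (Δ : Matrix (Fin s) (Fin s) ℝ)
    (hΔ : Δ = (δ * Real.sqrt T) • (1 : Matrix (Fin s) (Fin s) ℝ))
    -- the data were collected inside 𝒬, so that ‖D₀‖₂ ≤ δ√T:
    (hD₀norm : spec2Norm D₀ ≤ δ * Real.sqrt T)
    (P₁ : Matrix (Fin n) (Fin n) ℝ) (hP₁symm : P₁.IsSymm) (hP₁ : P₁.PosDef)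
    (Ω : Matrix (Fin n) (Fin n) ℝ) (hΩsymm : Ω.IsSymm) (hΩ : Ω.PosDef)
    (Y₁ : Matrix (Fin T) (Fin n) ℝ) (G₂ : Matrix (Fin T) (Fin p) ℝ)
    -- the robust Lyapunov inequality:
    (hrob : ∀ D : Matrix (Fin s) (Fin T) ℝ, LoewnerLE (D * Dᵀ) (Δ * Δᵀ) →
      NegDef (Y₁ᵀ * (X₁ - E * D)ᵀ * P₁⁻¹ * ((X₁ - E * D) * Y₁) - P₁ + Ω))
    (G₁ : Matrix (Fin T) (Fin n) ℝ) (hG₁ : G₁ = Y₁ * P₁⁻¹)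
    (Ψ : Matrix (Fin n) (Fin n) ℝ) (hΨ : Ψ = (X₁ - E * D₀) * G₁)
    (Ξ : Matrix (Fin n) (Fin p) ℝ) (hΞ : Ξ = (X₁ - E * D₀) * G₂)
    (V : (Fin n → ℝ) → ℝ) (hV : ∀ x, V x = x ⬝ᵥ (P₁⁻¹ *ᵥ x))
    (γ : ℝ) (hγ : 0 < γ)
    -- ℛ_γ ⊆ 𝒬:
    (hRQ : ∀ x : Fin n → ℝ, V x ≤ γ → x ∈ 𝒬set)
    -- V(x) + ℓ(x) + g(x,δ) ≤ γ for all x ∈ 𝒵 = ℛ_γ ∩ 𝒳ᶜ: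
    (hZ : ∀ x : Fin n → ℝ, V x ≤ γ →
      0 < ellFun X₁ E Δ P₁ Ω G₁ G₂ Q x + gFun X₁ E Δ P₁ G₁ G₂ Q δ x →
      V x + ellFun X₁ E Δ P₁ Ω G₁ G₂ Q x + gFun X₁ E Δ P₁ G₁ G₂ Q δ x ≤ γ) :
    -- then ℛ_γ is positively invariant for x⁺ = Ψx + ΞQ(x) + E d(x):
    ∀ x : ℕ → Fin n → ℝ,
      (∀ t, x (t + 1) = Ψ *ᵥ x t + Ξ *ᵥ Q (x t) + E *ᵥ d (x t)) →
      V (x 0) ≤ γ → ∀ t, V (x t) ≤ γ := by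
  have hNsymm : P₁⁻¹.IsSymm := by rw [IsSymm, transpose_nonsing_inv, hP₁symm.eq]
  have hD₀ : ∀ v, euclNorm (D₀ *ᵥ v) ≤ spec2Norm Δ * euclNorm v := fun v => by
    rw [hΔ]
    exact euclNorm_mulVec_le_spec2Norm_smul_one hD₀norm v
  have hneg := hrob D₀ (by
    rw [hΔ]
    exact loewnerLE_mul_transpose_of_spec2Norm_le hD₀norm)
  have hstep : ∀ x, V x ≤ γ → V (Ψ *ᵥ x + Ξ *ᵥ Q x + E *ᵥ d x) ≤
      V x + ellFun X₁ E Δ P₁ Ω G₁ G₂ Q x + gFun X₁ E Δ P₁ G₁ G₂ Q δ x := by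
    intro x hx
    have hw : euclNorm (d x) ≤ δ := hd x (hRQ x hx)
    have hlin := quadraticForm_le_of_negDef hP₁symm hP₁ hneg x
    rw [← hG₁] at hlin
    have hcross := sub_dotProduct_mulVec_sub_le P₁⁻¹ E
      (X₁ *ᵥ ((2 : ℝ) • (G₁ *ᵥ x) + G₂ *ᵥ Q x)) (X₁ *ᵥ (G₂ *ᵥ Q x)) _ _
      (hD₀ ((2 : ℝ) • (G₁ *ᵥ x) + G₂ *ᵥ Q x)) (hD₀ (G₂ *ᵥ Q x))
    have hdist := sub_dotProduct_mulVec_mulVec_le P₁⁻¹ E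
      (X₁ *ᵥ (G₁ *ᵥ x + G₂ *ᵥ Q x)) _ _ (hD₀ (G₁ *ᵥ x + G₂ *ᵥ Q x)) hw
    have hquad : (E *ᵥ d x) ⬝ᵥ (P₁⁻¹ *ᵥ (E *ᵥ d x)) ≤ spec2Norm (Eᵀ * P₁⁻¹ * E) * δ ^ 2 := by
      have h := sub_dotProduct_mulVec_mulVec_le P₁⁻¹ E 0 (-d x) (d x)
        (r := δ) (by simpa [euclNorm] using hw) hw
      simpa [mulVec_neg, euclNorm, sq, mul_assoc] using h
    have hres : ∀ v, X₁ *ᵥ v - E *ᵥ (D₀ *ᵥ v) = (X₁ - E * D₀) *ᵥ v := fun v => by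
      rw [sub_mulVec, mulVec_mulVec]
    rw [hres, hres] at hcross
    rw [hres] at hdist
    rw [hV (_ + _), hΨ, hΞ, quadraticForm_add_add hNsymm, hV x, ellFun, gFun]
    simp only [← mulVec_mulVec, mulVec_add, mulVec_smul] at hlin hcross hdist hquad ⊢
    linarith
  intro x hx h0 t
  induction t with
  | zero => exact h0
  | succ t ih =>
    rw [hx t]
    refine (hstep (x t) ih).trans ?_
    rcases le_or_gt (ellFun X₁ E Δ P₁ Ω G₁ G₂ Q (x t) + gFun X₁ E Δ P₁ G₁ G₂ Q δ (x t)) 0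
      with hle | hpos
    · linarith
    · exact hZ (x t) ih hpos
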